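/- arXiv:1507.04454 — 2 statements merged into one kernel-verified Lean document; each statement's English description precedes it below -/
import Mathlib

section
/- Let n ≥ 2 and let P be any set partition of {1,…,n} (not necessarily non-crossing) all of whose blocks have at least two elements, such that at least one block of P has three or more elements. Then the tensor T_P lies in the ℚ-linear span of {t_σ : σ ∈ Sₙ}. (This is the concrete form of the lemma: the weight system value of any labeled tree diagram with at least one trivalent vertex lies in the image of the weight system on connected trees.) -/
/- Let P be any set partition of {1,…,n} whose blocks all have ≥ 2 elements,
   with at least one block of ≥ 3 elements.  Then the tensor T_P (placing the
   factors of the κ-dual t_k of the iterated-bracket form at the positions of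
   each block, in increasing order) lies in the ℚ-span of the tensors t_σ
   (σ ∈ Sₙ).  κ, T_P and the family t are quantified via their defining
   (κ-contraction) properties. -/

open scoped TensorProduct

set_option synthInstance.maxHeartbeats 1000000
set_option maxHeartbeats 1000000

noncomputable section

abbrev sl2 : Type := ↥(LieAlgebra.SpecialLinear.sl (Fin 2) ℚ)

def H : sl2 :=
  ⟨!![1, 0; 0, -1], show _ ∈ LinearMap.ker (Matrix.traceLinearMap (Fin 2) ℚ ℚ) from
    LinearMap.mem_ker.2 (by simp [Matrix.trace_fin_two])⟩

def E : sl2 :=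
  ⟨!![0, 1; 0, 0], show _ ∈ LinearMap.ker (Matrix.traceLinearMap (Fin 2) ℚ ℚ) from
    LinearMap.mem_ker.2 (by simp [Matrix.trace_fin_two])⟩

def F : sl2 :=
  ⟨!![0, 0; 1, 0], show _ ∈ LinearMap.ker (Matrix.traceLinearMap (Fin 2) ℚ ℚ) from
    LinearMap.mem_ker.2 (by simp [Matrix.trace_fin_two])⟩

/-- The n-fold tensor power sl₂^{⊗n}. -/
abbrev TP (n : ℕ) : Type := ⨂[ℚ] (_ : Fin n), sl2

/-- The adjoint action of `x ∈ sl₂` on `sl₂^{⊗n}`, extended as a derivation. -/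
def actOn (n : ℕ) (x : sl2) : TP n →ₗ[ℚ] TP n :=
  ∑ i : Fin n,
    PiTensorProduct.map (fun j => if j = i then LieAlgebra.ad ℚ sl2 x else LinearMap.id)

/-- The space of invariant tensors of `sl₂^{⊗n}`. -/
def Invariants (n : ℕ) : Submodule ℚ (TP n) :=
  ⨅ x : sl2, LinearMap.ker (actOn n x)

/-- Pairing of `sl₂^{⊗n}` against `x₁ ⊗ ⋯ ⊗ xₙ` via `κ^{⊗n}`:
on pure tensors, `pairT κ n x (a₁ ⊗ ⋯ ⊗ aₙ) = ∏ i, κ(aᵢ, xᵢ)`. -/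
def pairT (κ : sl2 →ₗ[ℚ] sl2 →ₗ[ℚ] ℚ) (n : ℕ) (x : Fin n → sl2) : TP n →ₗ[ℚ] ℚ :=
  PiTensorProduct.lift
    ((MultilinearMap.mkPiAlgebra ℚ (Fin n) ℚ).compLinearMap fun i => κ.flip (x i))

/-- Left-iterated Lie bracket of a list: `[[⋯[a₁,a₂],⋯],a_k]`. -/
def lBrk : List sl2 → sl2
  | [] => 0
  | a :: l => l.foldl (fun y z => ⁅y, z⁆) a

/-- `κ([[⋯[x₁,x₂],⋯],x_{k-1}], x_k)`, read as `κ(x₁,x₂)` when `k = 2`. -/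
def brkVal (κ : sl2 →ₗ[ℚ] sl2 →ₗ[ℚ] ℚ) {k : ℕ} (x : Fin k → sl2) : ℚ :=
  κ (lBrk (List.ofFn x).dropLast) ((List.ofFn x).getLastD 0)

/-- For a block `B = {j₁ < ⋯ < j_k}`: `κ([[⋯[x_{j₁},x_{j₂}],⋯],x_{j_{k−1}}], x_{j_k})`. -/
def blockVal (κ : sl2 →ₗ[ℚ] sl2 →ₗ[ℚ] ℚ) {n : ℕ} (x : Fin n → sl2)
    (B : Finset (Fin n)) : ℚ :=
  κ (lBrk (((B.sort (· ≤ ·)).map x).dropLast)) (((B.sort (· ≤ ·)).map x).getLastD 0)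

/-- `P` is a set partition of `Fin n` all of whose blocks have ≥ 2 elements. -/
def IsPartitionGe2 (n : ℕ) (P : Finset (Finset (Fin n))) : Prop :=
  (∀ i : Fin n, ∃! B, B ∈ P ∧ i ∈ B) ∧ (∀ B ∈ P, 2 ≤ B.card)

/-!
The form `κ` is the trace form of the defining representation, so it satisfies
`κ([[z, w], c], b) = 2 (κ(z, b) κ(w, c) - κ(z, c) κ(w, b))`. Rotating `a`, `b`, `c` in this relation
for `z = [u, a]`, and using that `κ([u, a], b)` is skew in `a` and `b`, one can solve for the
product `κ([u, a], b) κ(w, c)` of two trees, the first with a trivalent vertex: it is a combination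
of three values `κ([[[u, ·], w], ·], ·)`. By the Jacobi identity, bracketing with an iterated
bracket `w` is a combination of iterated brackets in the permuted leaves of `w`, so these values
are combinations of connected trees. Absorbing the blocks one at a time into the big block
expresses `T_P` through the `t_σ`, because `κ^{⊗n}` is nondegenerate.
-/

section IteratedBracket

variable {L : Type*} [LieRing L]

/-- The left-normed bracket `[[⋯[a₁, a₂], ⋯], a_k]` in an arbitrary Lie ring, with value `0` on the
empty list. It extends `lBrk` beyond `sl₂`. -/
def iteratedBracket : List L → L
  | [] => 0
  | a :: l => l.foldl (⁅·, ·⁆) a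

theorem lBrk_eq_iteratedBracket (l : List sl2) : lBrk l = iteratedBracket l := by
  cases l <;> rfl

theorem iteratedBracket_append {p : List L} (hp : p ≠ []) (l : List L) :
    iteratedBracket (p ++ l) = l.foldl (⁅·, ·⁆) (iteratedBracket p) := by
  obtain ⟨a, p, rfl⟩ := List.exists_cons_of_ne_nil hp
  exact List.foldl_append

theorem iteratedBracket_concat {p : List L} (hp : p ≠ []) (a : L) :
    iteratedBracket (p ++ [a]) = ⁅iteratedBracket p, a⁆ :=
  iteratedBracket_append hp [a]

variable {ι R : Type*} [CommRing R] [LieAlgebra R L]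

variable (R) in
/-- Right bracketing `z ↦ ⁅z, a⁆` as a linear map; it adds the leaf `a` to a left-normed bracket. -/
def bracketRight (a : L) : L →ₗ[R] L where
  toFun z := ⁅z, a⁆
  map_add' y z := add_lie y z a
  map_smul' r z := smul_lie r z a

variable (R) in
/-- The submodule of `L`-valued functions of `x : ι → L` spanned by the left-normed brackets
`[[⋯[f x, x_{r₁}], ⋯], x_{r_k}]`, where `r` runs over the rearrangements of `q`. -/
def permBracketSpan (q : List ι) (f : (ι → L) → L) : Submodule R ((ι → L) → L) :=
  Submodule.span R
    {g | ∃ r : List ι, r.Perm q ∧ (fun x => (r.map x).foldl (⁅·, ·⁆) (f x)) = g}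

theorem lie_mem_permBracketSpan_concat {q : List ι} {f g : (ι → L) → L}
    (hg : g ∈ permBracketSpan R q f) (i : ι) :
    (fun x => ⁅g x, x i⁆) ∈ permBracketSpan R (q ++ [i]) f := by
  let addLeaf : ((ι → L) → L) →ₗ[R] ((ι → L) → L) :=
    LinearMap.piMap fun x => bracketRight R (x i)
  have le_comap : permBracketSpan R q f ≤ (permBracketSpan R (q ++ [i]) f).comap addLeaf := by
    refine Submodule.span_le.2 ?_
    rintro _ ⟨r, hr, rfl⟩
    refine Submodule.subset_span ⟨r ++ [i], hr.append_right [i], ?_⟩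
    funext x
    simp [addLeaf, bracketRight]
  exact le_comap hg

theorem permBracketSpan_lie_le_concat (q : List ι) (f : (ι → L) → L) (i : ι) :
    permBracketSpan R q (fun x => ⁅f x, x i⁆) ≤ permBracketSpan R (q ++ [i]) f := by
  refine Submodule.span_le.2 ?_
  rintro _ ⟨r, hr, rfl⟩
  exact Submodule.subset_span
    ⟨i :: r, (hr.cons i).trans (List.perm_append_singleton i q).symm, rfl⟩

theorem lie_iteratedBracket_mem_permBracketSpan (q : List ι) (f : (ι → L) → L) :
    (fun x => ⁅f x, iteratedBracket (q.map x)⁆) ∈ permBracketSpan R q f := by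
  induction q using List.reverseRecOn generalizing f with
  | nil =>
    simp only [List.map_nil, iteratedBracket, lie_zero]
    exact zero_mem _
  | append_singleton q i ih =>
    rcases eq_or_ne q [] with rfl | hq
    · exact Submodule.subset_span ⟨[i], List.Perm.refl _, rfl⟩
    · have jacobi : (fun x => ⁅f x, iteratedBracket ((q ++ [i]).map x)⁆) =
          (fun x => ⁅⁅f x, iteratedBracket (q.map x)⁆, x i⁆) -
            fun x => ⁅⁅f x, x i⁆, iteratedBracket (q.map x)⁆ := by
        funext x
        rw [List.map_append, List.map_singleton, iteratedBracket_concat (by simpa using hq),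
          leibniz_lie, ← lie_skew (iteratedBracket _), ← sub_eq_add_neg]
        rfl
      rw [jacobi]
      exact sub_mem (lie_mem_permBracketSpan_concat (ih f) i)
        (permBracketSpan_lie_le_concat q f i (ih fun x => ⁅f x, x i⁆))

end IteratedBracket

section TreeSpan

variable {R L ι : Type*} [CommRing R] [LieRing L] [LieAlgebra R L]

/-- The value `κ([[⋯[a₁, a₂], ⋯], a_{k-1}], a_k)` of a connected tree with leaves labelled by a
list. It is `0` on lists of length at most one. -/
def treeVal (κ : L →ₗ[R] L →ₗ[R] R) (l : List L) : R :=
  κ (iteratedBracket l.dropLast) (l.getLastD 0)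

theorem treeVal_concat (κ : L →ₗ[R] L →ₗ[R] R) (p : List L) (b : L) :
    treeVal κ (p ++ [b]) = κ (iteratedBracket p) b := by
  rw [treeVal, List.dropLast_concat, List.getLastD_concat]

/-- The span of the connected tree functions `x ↦ κ([⋯[x_{l₁}, x_{l₂}], ⋯], x_{l_k})` whose leaves
`l` enumerate a given multiset of labels. -/
def treeSpan (κ : L →ₗ[R] L →ₗ[R] R) (M : Multiset ι) : Submodule R ((ι → L) → R) :=
  Submodule.span R
    {g | ∃ l : List ι, (l : Multiset ι) = M ∧ (fun x => treeVal κ (l.map x)) = g}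

theorem treeVal_map_mem_treeSpan (κ : L →ₗ[R] L →ₗ[R] R) (l : List ι) :
    (fun x => treeVal κ (l.map x)) ∈ treeSpan κ (l : Multiset ι) :=
  Submodule.subset_span ⟨l, rfl, rfl⟩

theorem lie_lie_iteratedBracket_mem_treeSpan (κ : L →ₗ[R] L →ₗ[R] R) {p : List ι} (hp : p ≠ [])
    (q : List ι) (c b : ι) :
    (fun x => κ ⁅⁅iteratedBracket (p.map x), iteratedBracket (q.map x)⁆, x c⁆ (x b)) ∈
      treeSpan κ (p + q + {c, b} : Multiset ι) := by
  let closeTree : ((ι → L) → L) →ₗ[R] ((ι → L) → R) :=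
    LinearMap.piMap fun x => κ.flip (x b) ∘ₗ bracketRight R (x c)
  have le_comap : permBracketSpan R q (fun x => iteratedBracket (p.map x)) ≤
      (treeSpan κ (p + q + {c, b} : Multiset ι)).comap closeTree := by
    refine Submodule.span_le.2 ?_
    rintro _ ⟨r, hr, rfl⟩
    refine Submodule.subset_span ⟨p ++ r ++ [c] ++ [b], ?_, ?_⟩
    · rw [← Multiset.coe_eq_coe.2 hr, List.append_assoc _ [c]]
      rfl
    · funext x
      have hpx : p.map x ≠ [] := by simpa using hp
      have hprx : p.map x ++ r.map x ≠ [] := by simp [hp]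
      simp only [List.map_append, List.map_cons, List.map_nil, treeVal_concat]
      rw [iteratedBracket_concat hprx, iteratedBracket_append hpx]
      rfl
  exact le_comap (lie_iteratedBracket_mem_permBracketSpan q _)

/-- The two properties of the trace form of `sl₂` on which the argument rests: `κ` is invariant, in
the form that `κ ⁅u, a⁆ b` is skew in `a` and `b`, and it satisfies the relation expressing an
internal edge of a tree through two ways of pairing its four half-edges. -/
structure SatisfiesSl2Relation (κ : L →ₗ[R] L →ₗ[R] R) : Prop where
  lie_skew : ∀ u a b : L, κ ⁅u, a⁆ b = -κ ⁅u, b⁆ a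
  lie_lie : ∀ z w c b : L, κ ⁅⁅z, w⁆, c⁆ b = 2 * (κ z b * κ w c - κ z c * κ w b)

variable {κ : L →ₗ[R] L →ₗ[R] R}

theorem SatisfiesSl2Relation.four_mul_mul (hκ : SatisfiesSl2Relation κ) (u a b w c : L) :
    4 * (κ ⁅u, a⁆ b * κ w c) =
      κ ⁅⁅⁅u, a⁆, w⁆, c⁆ b - κ ⁅⁅⁅u, c⁆, w⁆, b⁆ a + κ ⁅⁅⁅u, b⁆, w⁆, a⁆ c := by
  rw [hκ.lie_lie, hκ.lie_lie, hκ.lie_lie, hκ.lie_skew u b a, hκ.lie_skew u c a,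
    hκ.lie_skew u c b]
  ring

theorem SatisfiesSl2Relation.treeVal_mul_treeVal_mem_treeSpan (hκ : SatisfiesSl2Relation κ)
    (h2 : IsUnit (2 : R)) {u : List ι} (hu : u ≠ []) (w : List ι) (a b c : ι) :
    (fun x => treeVal κ ((u ++ [a] ++ [b]).map x) * treeVal κ ((w ++ [c]).map x)) ∈
      treeSpan κ (u + w + {a, b, c} : Multiset ι) := by
  have h4 : IsUnit (4 : R) := by
    convert h2.mul h2 using 1
    norm_num
  have merged_mem (a b c : ι) :
      (fun x => κ ⁅⁅⁅iteratedBracket (u.map x), x a⁆, iteratedBracket (w.map x)⁆, x c⁆ (x b)) ∈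
        treeSpan κ (u + w + {a, b, c} : Multiset ι) := by
    have leaves : (u + w + {a, b, c} : Multiset ι) = (u ++ [a] : List ι) + w + {c, b} := by
      simp only [← Multiset.coe_add, Multiset.coe_singleton, Multiset.insert_eq_cons,
        ← Multiset.singleton_add]
      abel
    rw [leaves]
    convert lie_lie_iteratedBracket_mem_treeSpan κ (p := u ++ [a]) (by simp) w c b using 1
    funext x
    rw [List.map_append, List.map_singleton, iteratedBracket_concat (by simpa using hu)]
  have rotate_left : ({c, a, b} : Multiset ι) = {a, b, c} := by
    simp only [Multiset.insert_eq_cons, ← Multiset.singleton_add]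
    abel
  have rotate_right : ({b, c, a} : Multiset ι) = {a, b, c} := by
    simp only [Multiset.insert_eq_cons, ← Multiset.singleton_add]
    abel
  rw [← Submodule.smul_mem_iff_of_isUnit _ h4]
  convert add_mem (sub_mem (merged_mem a b c) (rotate_left ▸ merged_mem c a b))
    (rotate_right ▸ merged_mem b c a) using 1
  funext x
  simp only [List.map_append, List.map_cons, List.map_nil, treeVal_concat, Pi.smul_apply,
    smul_eq_mul, Pi.add_apply, Pi.sub_apply]
  rw [iteratedBracket_concat (by simpa using hu), hκ.four_mul_mul]

theorem exists_eq_append_of_three_le_length {l : List ι} (hl : 3 ≤ l.length) :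
    ∃ (u : List ι) (a b : ι), u ≠ [] ∧ l = u ++ [a] ++ [b] := by
  rcases List.eq_nil_or_concat' l with rfl | ⟨l, b, rfl⟩
  · simp at hl
  rcases List.eq_nil_or_concat' l with rfl | ⟨u, a, rfl⟩
  · simp at hl
  refine ⟨u, a, b, ?_, rfl⟩
  rintro rfl
  simp at hl

theorem SatisfiesSl2Relation.treeSpan_mul_treeSpan_le (hκ : SatisfiesSl2Relation κ)
    (h2 : IsUnit (2 : R)) {M : Multiset ι} (hM : 3 ≤ M.card) (N : Multiset ι) :
    treeSpan κ M * treeSpan κ N ≤ treeSpan κ (M + N) := by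
  rw [treeSpan, treeSpan, Submodule.span_mul_span, Submodule.span_le]
  rintro _ ⟨_, ⟨l, rfl, rfl⟩, _, ⟨m, rfl, rfl⟩, rfl⟩
  obtain ⟨u, a, b, hu, rfl⟩ := exists_eq_append_of_three_le_length hM
  rcases List.eq_nil_or_concat' m with rfl | ⟨w, c, rfl⟩
  · have treeVal_nil : (fun x : ι → L => treeVal κ (([] : List ι).map x)) = 0 := by
      funext x
      simp [treeVal, iteratedBracket]
    simp only [treeVal_nil, mul_zero]
    exact zero_mem _
  · have leaves : ((u ++ [a] ++ [b] : List ι) + (w ++ [c] : List ι) : Multiset ι) =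
        u + w + {a, b, c} := by
      simp only [← Multiset.coe_add, Multiset.coe_singleton, Multiset.insert_eq_cons,
        ← Multiset.singleton_add]
      abel
    rw [leaves]
    exact hκ.treeVal_mul_treeVal_mem_treeSpan h2 hu w a b c

theorem SatisfiesSl2Relation.mul_prod_mem_treeSpan (hκ : SatisfiesSl2Relation κ)
    (h2 : IsUnit (2 : R)) {M : Multiset ι} (hM : 3 ≤ M.card) {f : (ι → L) → R}
    (hf : f ∈ treeSpan κ M) {α : Type*} (s : Finset α) {N : α → Multiset ι}
    {g : α → (ι → L) → R} (hg : ∀ i ∈ s, g i ∈ treeSpan κ (N i)) :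
    f * ∏ i ∈ s, g i ∈ treeSpan κ (M + ∑ i ∈ s, N i) := by
  induction s using Finset.cons_induction with
  | empty => simpa using hf
  | cons i s hi ih =>
    rw [Finset.forall_mem_cons] at hg
    rw [Finset.prod_cons, Finset.sum_cons, mul_comm (g i), ← mul_assoc, add_comm (N i),
      ← add_assoc]
    exact hκ.treeSpan_mul_treeSpan_le h2 (hM.trans (by simp)) (N i)
      (Submodule.mul_mem_mul (ih hg.2) hg.1)

end TreeSpan

section Partition

theorem sum_val_eq_univ_val {α : Type*} [Fintype α] {P : Finset (Finset α)}
    (hP : ∀ i : α, ∃! B, B ∈ P ∧ i ∈ B) : ∑ B ∈ P, B.val = (Finset.univ : Finset α).val := by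
  classical
  ext i
  obtain ⟨B, ⟨hBP, hiB⟩, unique⟩ := hP i
  have other_blocks (C : Finset α) (hC : C ∈ P) (hne : C ≠ B) : C.val.count i = 0 :=
    Multiset.count_eq_zero.2 fun hiC => hne (unique C ⟨hC, hiC⟩)
  rw [Multiset.count_sum', Finset.sum_eq_single_of_mem B hBP other_blocks,
    Multiset.count_eq_one_of_mem B.nodup hiB,
    Multiset.count_eq_one_of_mem Finset.univ.nodup (Finset.mem_univ i)]

theorem exists_perm_ofFn_eq {n : ℕ} {l : List (Fin n)}
    (hl : (l : Multiset (Fin n)) = Finset.univ.val) :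
    ∃ σ : Equiv.Perm (Fin n), List.ofFn σ = l := by
  have nodup : l.Nodup := by
    rw [← Multiset.coe_nodup, hl]
    exact Finset.univ.nodup
  have mem (i : Fin n) : i ∈ l := by
    rw [← Multiset.mem_coe, hl]
    exact Finset.mem_univ i
  have length_eq : l.length = n := by
    rw [← Multiset.coe_card, hl]
    exact Finset.card_fin n
  refine ⟨(finCongr length_eq.symm).trans (nodup.getEquivOfForallMemList l mem), ?_⟩
  exact List.ext_get (by simp [length_eq]) (by simp)

variable (κ : sl2 →ₗ[ℚ] sl2 →ₗ[ℚ] ℚ) {n : ℕ}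

theorem brkVal_comp_eq_treeVal (x : Fin n → sl2) (σ : Fin n → Fin n) :
    brkVal κ (x ∘ σ) = treeVal κ ((List.ofFn σ).map x) := by
  rw [brkVal, lBrk_eq_iteratedBracket, List.map_ofFn, treeVal]

theorem blockVal_eq_treeVal (x : Fin n → sl2) (B : Finset (Fin n)) :
    blockVal κ x B = treeVal κ ((B.sort (· ≤ ·)).map x) := by
  rw [blockVal, lBrk_eq_iteratedBracket, treeVal]

theorem blockVal_mem_treeSpan (B : Finset (Fin n)) :
    (fun x => blockVal κ x B) ∈ treeSpan κ B.val := by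
  simp only [blockVal_eq_treeVal]
  simpa only [Finset.sort_eq] using treeVal_map_mem_treeSpan κ (B.sort (· ≤ ·))

theorem treeSpan_univ_le_span_brkVal :
    treeSpan κ (Finset.univ : Finset (Fin n)).val ≤
      Submodule.span ℚ (Set.range fun (σ : Equiv.Perm (Fin n)) x => brkVal κ (x ∘ σ)) := by
  refine Submodule.span_mono ?_
  rintro _ ⟨l, hl, rfl⟩
  obtain ⟨σ, rfl⟩ := exists_perm_ofFn_eq hl
  exact ⟨σ, funext fun x => brkVal_comp_eq_treeVal κ x σ⟩

variable {κ}

theorem SatisfiesSl2Relation.prod_blockVal_mem_treeSpan (hκ : SatisfiesSl2Relation κ)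
    {P : Finset (Finset (Fin n))} (hP : ∀ i, ∃! B, B ∈ P ∧ i ∈ B)
    (hbig : ∃ B ∈ P, 3 ≤ B.card) :
    (fun x => ∏ B ∈ P, blockVal κ x B) ∈ treeSpan κ (Finset.univ : Finset (Fin n)).val := by
  obtain ⟨B, hBP, hB⟩ := hbig
  have absorbed := hκ.mul_prod_mem_treeSpan two_ne_zero.isUnit hB (blockVal_mem_treeSpan κ B)
    (P.erase B) fun C _ => blockVal_mem_treeSpan κ C
  rw [Finset.add_sum_erase P Finset.val hBP, sum_val_eq_univ_val hP,
    Finset.mul_prod_erase P (fun C x => blockVal κ x C) hBP] at absorbed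
  simpa only [← Finset.prod_fn] using absorbed

end Partition

section TraceForm

/-- `κ` is the trace form `(a, b) ↦ tr (ab)` of the defining representation of `sl₂`. -/
def IsTraceForm (κ : sl2 →ₗ[ℚ] sl2 →ₗ[ℚ] ℚ) : Prop :=
  ∀ a b : sl2, κ a b = (a.1 * b.1).trace

theorem sl2_apply_one_one (a : sl2) : a.1 1 1 = -a.1 0 0 := by
  have trace_eq_zero : a.1.trace = 0 := LinearMap.mem_ker.1 a.2
  rw [Matrix.trace_fin_two] at trace_eq_zero
  linarith

theorem sl2_eq_smul_add_smul_add_smul (a : sl2) :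
    a = a.1 0 0 • H + a.1 0 1 • E + a.1 1 0 • F := by
  ext i j
  fin_cases i <;> fin_cases j <;> simp [H, E, F, sl2_apply_one_one]

theorem isTraceForm_of_apply_basis {κ : sl2 →ₗ[ℚ] sl2 →ₗ[ℚ] ℚ}
    (hHH : κ H H = 2) (hEF : κ E F = 1) (hFE : κ F E = 1)
    (hHE : κ H E = 0) (hEH : κ E H = 0) (hHF : κ H F = 0) (hFH : κ F H = 0)
    (hEE : κ E E = 0) (hFF : κ F F = 0) : IsTraceForm κ := by
  intro a b
  conv_lhs => rw [sl2_eq_smul_add_smul_add_smul a, sl2_eq_smul_add_smul_add_smul b]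
  simp only [map_add, map_smul, LinearMap.add_apply, LinearMap.smul_apply, smul_eq_mul,
    hHH, hEF, hFE, hHE, hEH, hHF, hFH, hEE, hFF, Matrix.trace_fin_two, Matrix.mul_apply,
    Fin.sum_univ_two, sl2_apply_one_one]
  ring

variable {κ : sl2 →ₗ[ℚ] sl2 →ₗ[ℚ] ℚ}

theorem IsTraceForm.satisfiesSl2Relation (hκ : IsTraceForm κ) : SatisfiesSl2Relation κ where
  lie_skew u a b := by
    simp only [hκ _ _, LieAlgebra.SpecialLinear.sl_bracket, Matrix.trace_fin_two,
      Matrix.mul_apply, Matrix.sub_apply, Fin.sum_univ_two, sl2_apply_one_one]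
    ring
  lie_lie z w c b := by
    simp only [hκ _ _, LieAlgebra.SpecialLinear.sl_bracket, Matrix.trace_fin_two,
      Matrix.mul_apply, Matrix.sub_apply, Fin.sum_univ_two, sl2_apply_one_one]
    ring

theorem IsTraceForm.nondegenerate (hκ : IsTraceForm κ) : κ.Nondegenerate := by
  refine LinearMap.BilinForm.Nondegenerate.ofSeparatingLeft fun a ha => ?_
  have apply_zero_zero : a.1 0 0 = 0 := by
    simpa [hκ _ _, H, Matrix.trace_fin_two, Matrix.mul_apply, sl2_apply_one_one] using ha H
  have apply_one_zero : a.1 1 0 = 0 := by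
    simpa [hκ _ _, E, Matrix.trace_fin_two, Matrix.mul_apply] using ha E
  have apply_zero_one : a.1 0 1 = 0 := by
    simpa [hκ _ _, F, Matrix.trace_fin_two, Matrix.mul_apply] using ha F
  rw [sl2_eq_smul_add_smul_add_smul a, apply_zero_zero, apply_zero_one, apply_one_zero]
  simp only [zero_smul, add_zero]

end TraceForm

section Pairing

/-- The pairing of `sl₂^{⊗n}` with all pure tensors at once: `T` is sent to the function
`x ↦ κ^{⊗n}(T, x₁ ⊗ ⋯ ⊗ xₙ)`. -/
def pairingMap (κ : sl2 →ₗ[ℚ] sl2 →ₗ[ℚ] ℚ) (n : ℕ) : TP n →ₗ[ℚ] ((Fin n → sl2) → ℚ) :=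
  LinearMap.pi (pairT κ n)

variable {κ : sl2 →ₗ[ℚ] sl2 →ₗ[ℚ] ℚ}

theorem piTensorProduct_dualBasis_repr_eq_pairT (hκ : κ.Nondegenerate) {ι : Type*} [Finite ι]
    [DecidableEq ι] (b : Module.Basis ι ℚ sl2) {n : ℕ} (T : TP n) (d : Fin n → ι) :
    (Basis.piTensorProduct fun _ => LinearMap.BilinForm.dualBasis κ hκ b).repr T d =
      pairT κ n (b ∘ d) T := by
  induction T using PiTensorProduct.induction_on with
  | smul_tprod r a =>
    simp [pairT, Basis.piTensorProduct_repr_tprod_apply]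
  | add S T hS hT => simp [hS, hT]

theorem pairingMap_injective (hκ : κ.Nondegenerate) (n : ℕ) :
    Function.Injective (pairingMap κ n) := by
  intro S T hST
  let b := Module.finBasis ℚ sl2
  refine (Basis.piTensorProduct fun _ => LinearMap.BilinForm.dualBasis κ hκ b).ext_elem fun d => ?_
  rw [piTensorProduct_dualBasis_repr_eq_pairT, piTensorProduct_dualBasis_repr_eq_pairT]
  exact congrFun hST (b ∘ d)

end Pairing

theorem partition_tensor_mem_span_of_big_block
    (κ : sl2 →ₗ[ℚ] sl2 →ₗ[ℚ] ℚ)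
    (hHH : κ H H = 2) (hEF : κ E F = 1) (hFE : κ F E = 1)
    (hHE : κ H E = 0) (hEH : κ E H = 0) (hHF : κ H F = 0) (hFH : κ F H = 0)
    (hEE : κ E E = 0) (hFF : κ F F = 0) :
    ∀ n, 2 ≤ n →
    ∀ P : Finset (Finset (Fin n)), IsPartitionGe2 n P → (∃ B ∈ P, 3 ≤ B.card) →
    ∀ T : TP n, (∀ x : Fin n → sl2, pairT κ n x T = ∏ B ∈ P, blockVal κ x B) →
    ∀ t : Equiv.Perm (Fin n) → TP n,
      (∀ σ (x : Fin n → sl2), pairT κ n x (t σ) = brkVal κ (x ∘ σ)) →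
      T ∈ Submodule.span ℚ (Set.range t) := by
  intro n _ P hP hbig T hT t ht
  have hκ := isTraceForm_of_apply_basis hHH hEF hFE hHE hEH hHF hFH hEE hFF
  have pairing_T : pairingMap κ n T = fun x => ∏ B ∈ P, blockVal κ x B := funext hT
  have pairing_t : pairingMap κ n ∘ t = fun (σ : Equiv.Perm (Fin n)) x => brkVal κ (x ∘ σ) :=
    funext fun σ => funext (ht σ)
  rw [← SetLike.mem_coe, ← (pairingMap_injective hκ.nondegenerate n).mem_set_image,
    ← Submodule.map_coe, SetLike.mem_coe, Submodule.map_span, ← Set.range_comp, pairing_t,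
    pairing_T]
  exact treeSpan_univ_le_span_brkVal κ
    (hκ.satisfiesSl2Relation.prod_blockVal_mem_treeSpan hP.1 hbig)
end
end

section
/- For every n ≥ 2, the symmetric group Sₙ acts ℚ-linearly on sl₂^{⊗n} by permuting tensor factors, this action preserves the subspace Inv(sl₂^{⊗n}), and the subspace of Inv(sl₂^{⊗n}) consisting of tensors fixed by every permutation has dimension 1 if n is even and dimension 0 if n is odd. -/
/- The symmetric group Sₙ acts ℚ-linearly on sl₂^{⊗n} by permuting tensor
   factors (σ : m₁⊗⋯⊗mₙ ↦ m_{σ⁻¹(1)}⊗⋯⊗m_{σ⁻¹(n)}); this action preserves the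
   subspace Inv(sl₂^{⊗n}) of invariant tensors, and the subspace of
   Inv(sl₂^{⊗n}) of tensors fixed by every permutation has dimension 1 for n
   even and 0 for n odd (n ≥ 2). -/

open scoped TensorProduct

set_option synthInstance.maxHeartbeats 1000000
set_option maxHeartbeats 1000000

noncomputable section

/-- The ℚ-linear action of `σ ∈ Sₙ` on `sl₂^{⊗n}` permuting the tensor factors. -/
def permMap (n : ℕ) (σ : Equiv.Perm (Fin n)) : TP n →ₗ[ℚ] TP n :=
  (PiTensorProduct.reindex ℚ (fun _ : Fin n => sl2) σ).toLinearMap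

/-- The subspace of invariant tensors fixed by every permutation of the factors. -/
def SymFixedInvariants (n : ℕ) : Submodule ℚ (TP n) :=
  Invariants n ⊓ ⨅ σ : Equiv.Perm (Fin n), LinearMap.ker (permMap n σ - LinearMap.id)

/-!
In the basis `h, e, f` of `sl2`, the coefficient of a symmetric tensor at a word depends only on the
numbers `a, p, q` of letters `h, e, f` in it. Annihilation by `h` forces `p = q` wherever the
coefficient is nonzero, and annihilation by `e` is a recursion trading two letters `h` for an `e`
and an `f`. An invariant symmetric tensor is therefore determined by its coefficient at `a = 0`,
`p = q`: there is no such content in odd degree and exactly one in even degree. In even degree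
`(a - 1)‼ * (2 * p)‼` solves the recursion; it counts the ways to split a word into the terms of
Casimir tensors `h ⊗ h + 2 (e ⊗ f + f ⊗ e)`, with their weights.
-/

section WordContent

variable {ι κ : Type*} [Fintype ι]

/-- The content of a word `s : ι → κ`: the multiset of its letters. Words over the indices of a
basis of `M` label the induced basis of the tensor power of `M`, and two words have the same content
iff they differ by a permutation of `ι`. -/
def wordContent (s : ι → κ) : Multiset κ :=
  Finset.univ.val.map s

lemma card_wordContent (s : ι → κ) : (wordContent s).card = Fintype.card ι := by
  simp [wordContent]

lemma exists_wordContent_eq {m : Multiset κ} (hm : m.card = Fintype.card ι) :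
    ∃ s : ι → κ, wordContent s = m := by
  classical
  obtain ⟨e⟩ : Nonempty (ι ≃ m) := Fintype.card_eq.mp (by simp [hm])
  refine ⟨fun i => (e i).1, ?_⟩
  rw [wordContent, ← Function.comp_def (fun a : m => a.1) e, ← Multiset.map_map,
    Multiset.map_univ_val_equiv, Multiset.map_univ_coe]

lemma wordContent_comp_perm (s : ι → κ) (σ : Equiv.Perm ι) :
    wordContent (s ∘ σ) = wordContent s := by
  rw [wordContent, ← Multiset.map_map, Multiset.map_univ_val_equiv, wordContent]

lemma exists_perm_comp_eq_of_wordContent_eq {s t : ι → κ} (h : wordContent s = wordContent t) :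
    ∃ σ : Equiv.Perm ι, t ∘ σ = s := by
  classical
  have fiberEquiv (k : κ) : Nonempty ({i // s i = k} ≃ {i // t i = k}) := by
    have hcount := congrArg (Multiset.count k) h
    simp only [wordContent, Multiset.count_map, eq_comm (a := k)] at hcount
    rw [← Fintype.card_eq, Fintype.card_subtype, Fintype.card_subtype]
    exact hcount
  exact ⟨Equiv.ofFiberEquiv fun k => (fiberEquiv k).some,
    funext fun i => Equiv.ofFiberEquiv_map _ i⟩

variable [DecidableEq κ]

lemma wordContent_update [DecidableEq ι] (s : ι → κ) (i : ι) (k : κ) :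
    wordContent (Function.update s i k) = k ::ₘ (wordContent s).erase (s i) := by
  have split (t : ι → κ) : wordContent t = t i ::ₘ (Finset.univ.erase i).val.map t := by
    rw [wordContent, ← Multiset.map_cons, Finset.erase_val, Multiset.cons_erase (Finset.mem_univ i)]
  rw [split s, Multiset.erase_cons_head, split (Function.update s i k), Function.update_self]
  congr 1
  exact Multiset.map_congr rfl fun j hj => Function.update_of_ne (Finset.ne_of_mem_erase hj) k s

lemma sum_comp_eq_sum_count_wordContent [Fintype κ] {A : Type*} [AddCommMonoid A]
    (s : ι → κ) (φ : κ → A) :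
    ∑ i, φ (s i) = ∑ k, (wordContent s).count k • φ k := by
  have hsum : ∑ i, φ (s i) = ((wordContent s).map φ).sum := by
    rw [wordContent, Multiset.map_map]; rfl
  rw [hsum, Finset.sum_multiset_map_count]
  refine Finset.sum_subset (Finset.subset_univ _) fun k _ hk => ?_
  rw [Multiset.count_eq_zero_of_notMem (by simpa using hk), zero_smul]

end WordContent

section TensorPower

variable {ι κ R M : Type*} [Fintype ι] [CommSemiring R] [AddCommMonoid M] [Module R M]

section Derivation

variable [DecidableEq ι]

/-- The extension of an endomorphism `f` of `M` to the tensor power `⨂[R] _ : ι, M` as a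
derivation, that is, the sum over `i : ι` of `f` acting on the `i`-th factor. The action `actOn` of
`x : sl2` is the case `f = ad x`. -/
def tensorDerivation (f : Module.End R M) : Module.End R (⨂[R] _ : ι, M) :=
  ∑ i : ι, PiTensorProduct.map fun j => if j = i then f else LinearMap.id

lemma tensorDerivation_tprod (f : Module.End R M) (m : ι → M) :
    tensorDerivation f (PiTensorProduct.tprod R m) =
      ∑ i, PiTensorProduct.tprod R (Function.update m i (f (m i))) := by
  simp only [tensorDerivation, LinearMap.sum_apply, PiTensorProduct.map_tprod]
  refine Finset.sum_congr rfl fun i _ => congrArg _ (funext fun j => ?_)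
  rcases eq_or_ne j i with rfl | hj
  · simp
  · simp [hj]

lemma reindex_tensorDerivation (σ : Equiv.Perm ι) (f : Module.End R M) (v : ⨂[R] _ : ι, M) :
    PiTensorProduct.reindex R (fun _ => M) σ (tensorDerivation f v) =
      tensorDerivation f (PiTensorProduct.reindex R (fun _ => M) σ v) := by
  simp only [tensorDerivation, LinearMap.sum_apply, map_sum, ← PiTensorProduct.map_reindex]
  exact Fintype.sum_equiv σ _ _ fun i => by simp only [Equiv.symm_apply_eq]

end Derivation

/-- The basis of the tensor power of `M` induced by a basis of `M`, labelled by words. -/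
def tensorPowerBasis (b : Module.Basis κ R M) : Module.Basis (ι → κ) R (⨂[R] _ : ι, M) :=
  Basis.piTensorProduct fun _ => b

variable (b : Module.Basis κ R M)

lemma tensorPowerBasis_repr_tprod (m : ι → M) (s : ι → κ) :
    (tensorPowerBasis b).repr (PiTensorProduct.tprod R m) s = ∏ i, b.repr (m i) (s i) :=
  Basis.piTensorProduct_repr_tprod_apply _ m s

lemma tensorPowerBasis_repr_reindex (σ : Equiv.Perm ι) (v : ⨂[R] _ : ι, M) (s : ι → κ) :
    (tensorPowerBasis b).repr (PiTensorProduct.reindex R (fun _ => M) σ v) s =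
      (tensorPowerBasis b).repr v (s ∘ σ) := by
  induction v using PiTensorProduct.induction_on with
  | smul_tprod r m =>
    simp only [map_smul, PiTensorProduct.reindex_tprod, Finsupp.smul_apply,
      tensorPowerBasis_repr_tprod]
    congr 1
    exact (Fintype.prod_equiv σ _ _ (by simp)).symm
  | add v w hv hw => simp only [map_add, Finsupp.add_apply, hv, hw]

lemma forall_reindex_eq_iff_exists_repr_eq_wordContent (v : ⨂[R] _ : ι, M) :
    (∀ σ : Equiv.Perm ι, PiTensorProduct.reindex R (fun _ => M) σ v = v) ↔
      ∃ F : Multiset κ → R, ∀ s, (tensorPowerBasis b).repr v s = F (wordContent s) := by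
  constructor
  · intro hv
    have factors : Function.FactorsThrough ((tensorPowerBasis b).repr v) wordContent := by
      intro s t hst
      obtain ⟨σ, rfl⟩ := exists_perm_comp_eq_of_wordContent_eq hst
      rw [← tensorPowerBasis_repr_reindex, hv σ]
    obtain ⟨F, hF⟩ := (Function.factorsThrough_iff _).mp factors
    exact ⟨F, congrFun hF⟩
  · rintro ⟨F, hF⟩ σ
    refine (tensorPowerBasis b).ext_elem fun s => ?_
    rw [tensorPowerBasis_repr_reindex, hF, hF, wordContent_comp_perm]

variable [DecidableEq ι] [Fintype κ] [DecidableEq κ]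

lemma tensorPowerBasis_repr_tensorDerivation (f : Module.End R M) (v : ⨂[R] _ : ι, M)
    (s : ι → κ) :
    (tensorPowerBasis b).repr (tensorDerivation f v) s =
      ∑ i, ∑ k, LinearMap.toMatrix b b f (s i) k *
        (tensorPowerBasis b).repr v (Function.update s i k) := by
  induction v using PiTensorProduct.induction_on with
  | smul_tprod r m =>
    have repr_f (y : M) (j : κ) :
        b.repr (f y) j = ∑ k, LinearMap.toMatrix b b f j k * b.repr y k :=
      (congrFun (LinearMap.toMatrix_mulVec_repr b b f y) j).symm
    simp only [map_smul, tensorDerivation_tprod, map_sum, Finsupp.smul_apply,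
      Finsupp.finsetSum_apply, tensorPowerBasis_repr_tprod, smul_eq_mul, Finset.mul_sum]
    refine Finset.sum_congr rfl fun i _ => ?_
    have prod_split (m' : ι → M) (t : ι → κ) :
        ∏ j, b.repr (m' j) (t j) =
          b.repr (m' i) (t i) * ∏ j ∈ Finset.univ.erase i, b.repr (m' j) (t j) :=
      (Finset.mul_prod_erase _ _ (Finset.mem_univ i)).symm
    have off_i_left : ∏ j ∈ Finset.univ.erase i, b.repr (Function.update m i (f (m i)) j) (s j) =
        ∏ j ∈ Finset.univ.erase i, b.repr (m j) (s j) :=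
      Finset.prod_congr rfl fun j hj => by rw [Function.update_of_ne (Finset.ne_of_mem_erase hj)]
    have off_i_right (k : κ) :
        ∏ j ∈ Finset.univ.erase i, b.repr (m j) (Function.update s i k j) =
          ∏ j ∈ Finset.univ.erase i, b.repr (m j) (s j) :=
      Finset.prod_congr rfl fun j hj => by rw [Function.update_of_ne (Finset.ne_of_mem_erase hj)]
    simp only [prod_split, Function.update_self, off_i_left, off_i_right, repr_f,
      Finset.sum_mul, Finset.mul_sum]
    exact Finset.sum_congr rfl fun k _ => by ring
  | add v w hv hw =>
    simp only [map_add, Finsupp.add_apply, hv, hw, mul_add, Finset.sum_add_distrib]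

lemma tensorPowerBasis_repr_tensorDerivation_of_symmetric (f : Module.End R M)
    {v : ⨂[R] _ : ι, M} {F : Multiset κ → R}
    (hF : ∀ s, (tensorPowerBasis b).repr v s = F (wordContent s)) (s : ι → κ) :
    (tensorPowerBasis b).repr (tensorDerivation f v) s =
      ∑ j, (wordContent s).count j •
        ∑ k, LinearMap.toMatrix b b f j k * F (k ::ₘ (wordContent s).erase j) := by
  simp only [tensorPowerBasis_repr_tensorDerivation, hF, wordContent_update]
  exact sum_comp_eq_sum_count_wordContent s
    fun j => ∑ k, LinearMap.toMatrix b b f j k * F (k ::ₘ (wordContent s).erase j)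

end TensorPower

section Permutation

variable {n : ℕ}

lemma permMap_tprod (σ : Equiv.Perm (Fin n)) (m : Fin n → sl2) :
    permMap n σ (PiTensorProduct.tprod ℚ m) = PiTensorProduct.tprod ℚ (fun i => m (σ⁻¹ i)) :=
  PiTensorProduct.reindex_tprod (s := fun _ => sl2) σ m

lemma permMap_mul (σ τ : Equiv.Perm (Fin n)) :
    permMap n (σ * τ) = permMap n σ ∘ₗ permMap n τ := by
  refine PiTensorProduct.ext (MultilinearMap.ext fun m => ?_)
  simp only [LinearMap.compMultilinearMap_apply, LinearMap.comp_apply, permMap_tprod, mul_inv_rev,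
    Equiv.Perm.mul_apply]

lemma mem_invariants_iff {v : TP n} :
    v ∈ Invariants n ↔ ∀ x : sl2, tensorDerivation (LieAlgebra.ad ℚ sl2 x) v = 0 := by
  simp only [Invariants, Submodule.mem_iInf, LinearMap.mem_ker]
  rfl

lemma permMap_mem_invariants (σ : Equiv.Perm (Fin n)) {v : TP n} (hv : v ∈ Invariants n) :
    permMap n σ v ∈ Invariants n := by
  rw [mem_invariants_iff] at hv ⊢
  intro x
  calc tensorDerivation (LieAlgebra.ad ℚ sl2 x) (permMap n σ v)
      = permMap n σ (tensorDerivation (LieAlgebra.ad ℚ sl2 x) v) :=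
        (reindex_tensorDerivation σ _ v).symm
    _ = 0 := by rw [hv x, map_zero]

end Permutation

section InvariantCoeff

/-- The linear conditions on the coefficients `F m` of a symmetric tensor of degree `n` over the
basis `h, e, f` (letters `0, 1, 2`) of `sl2`, as a function of the content `m`, which express that
the tensor is invariant: `weight`, `raise` and `lower` say that it is annihilated by `h`, `e`
and `f` respectively. -/
structure IsInvariantCoeff {R : Type*} [CommSemiring R] (n : ℕ) (F : Multiset (Fin 3) → R) :
    Prop where
  weight : ∀ m : Multiset (Fin 3), m.card = n → m.count 1 * F m = m.count 2 * F m
  raise : ∀ m : Multiset (Fin 3), m.card = n →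
    m.count 0 * F (2 ::ₘ m.erase 0) = 2 * m.count 1 * F (0 ::ₘ m.erase 1)
  lower : ∀ m : Multiset (Fin 3), m.card = n →
    m.count 0 * F (1 ::ₘ m.erase 0) = 2 * m.count 2 * F (0 ::ₘ m.erase 2)

lemma IsInvariantCoeff.natCast {R : Type*} [CommSemiring R] {n : ℕ} {F : Multiset (Fin 3) → ℕ}
    (hF : IsInvariantCoeff n F) : IsInvariantCoeff n fun m => (F m : R) where
  weight m hm := by exact_mod_cast congrArg (Nat.cast (R := R)) (hF.weight m hm)
  raise m hm := by exact_mod_cast congrArg (Nat.cast (R := R)) (hF.raise m hm)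
  lower m hm := by exact_mod_cast congrArg (Nat.cast (R := R)) (hF.lower m hm)

lemma card_eq_sum_count_fin_three (m : Multiset (Fin 3)) :
    m.card = m.count 0 + m.count 1 + m.count 2 := by
  rw [← Fin.sum_univ_three fun k => m.count k]
  exact (Multiset.sum_count_eq_card fun k _ => Finset.mem_univ k).symm

/-- The content with `k` letters `e`, `k` letters `f` and no letter `h`. The coefficient there
determines an invariant symmetric tensor of degree `2 * k`. -/
def balancedContent (k : ℕ) : Multiset (Fin 3) :=
  Multiset.replicate k 1 + Multiset.replicate k 2

lemma card_balancedContent (k : ℕ) : (balancedContent k).card = k + k := by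
  simp [balancedContent]

lemma eq_balancedContent {m : Multiset (Fin 3)} (h_zero : m.count 0 = 0)
    (h_weight : m.count 1 = m.count 2) : m = balancedContent (m.count 1) := by
  ext k
  fin_cases k <;> simp [balancedContent, Multiset.count_replicate, h_zero, h_weight]

section Uniqueness

variable {R : Type*} [CommRing R] [NoZeroDivisors R] [CharZero R] {n : ℕ}
  {F : Multiset (Fin 3) → R}

lemma IsInvariantCoeff.apply_eq_zero_of_count_ne (hF : IsInvariantCoeff n F)
    {m : Multiset (Fin 3)} (hm : m.card = n) (h : m.count 1 ≠ m.count 2) : F m = 0 :=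
  (mul_eq_mul_right_iff.mp (hF.weight m hm)).resolve_left fun h' => h (Nat.cast_injective h')

/-- Solving `raise` for the right-hand side trades two letters `h` for an `e` and an `f`. -/
lemma IsInvariantCoeff.apply_zero_cons_eq_zero (hF : IsInvariantCoeff n F)
    {r : Multiset (Fin 3)} (hr : r.card + 1 = n)
    (h : 0 ∈ r → F (2 ::ₘ 1 ::ₘ r.erase 0) = 0) : F (0 ::ₘ r) = 0 := by
  have key := hF.raise (1 ::ₘ r) (by simpa using hr)
  simp only [Multiset.erase_cons_head, Multiset.count_cons_self,
    Multiset.count_cons_of_ne (show (0 : Fin 3) ≠ 1 by decide),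
    Multiset.erase_cons_tail _ (show (1 : Fin 3) ≠ 0 by decide)] at key
  have lhs_zero : (r.count 0 : R) * F (2 ::ₘ 1 ::ₘ r.erase 0) = 0 := by
    by_cases hmem : 0 ∈ r
    · rw [h hmem, mul_zero]
    · rw [Multiset.count_eq_zero_of_notMem hmem, Nat.cast_zero, zero_mul]
  rw [lhs_zero, eq_comm, mul_eq_zero] at key
  refine key.resolve_left ?_
  exact_mod_cast (by positivity : 2 * (r.count 1 + 1) ≠ 0)

theorem IsInvariantCoeff.eq_zero_of_apply_balancedContent (hF : IsInvariantCoeff n F)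
    (h_balanced : ∀ k, n = k + k → F (balancedContent k) = 0) {m : Multiset (Fin 3)}
    (hm : m.card = n) : F m = 0 := by
  induction hcount : m.count 0 using Nat.strong_induction_on generalizing m with
  | _ a ih =>
    by_cases h_weight : m.count 1 = m.count 2
    swap
    · exact hF.apply_eq_zero_of_count_ne hm h_weight
    by_cases h_mem : 0 ∈ m
    · obtain ⟨r, rfl⟩ := Multiset.exists_cons_of_mem h_mem
      rw [Multiset.card_cons] at hm
      refine hF.apply_zero_cons_eq_zero hm fun h0 => ih _ ?_ ?_ rfl
      · rw [Multiset.count_cons_self] at hcount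
        rw [Multiset.count_cons_of_ne (by decide), Multiset.count_cons_of_ne (by decide),
          Multiset.count_erase_self]
        omega
      · simpa [Multiset.card_erase_add_one h0] using hm
    · have h_zero := Multiset.count_eq_zero_of_notMem h_mem
      rw [eq_balancedContent h_zero h_weight]
      refine h_balanced _ ?_
      rw [← hm, card_eq_sum_count_fin_three, h_zero, zero_add, h_weight]

end Uniqueness

section Casimir

open scoped Nat

/-- The coefficient at a word with `a` letters `h`, `p` letters `e` and `q` letters `f`, up to a
factor depending only on the degree, of the symmetrization of a tensor power of the Casimir tensor
`h ⊗ h + 2 (e ⊗ f + f ⊗ e)`. The truncated subtraction at `a = 0` gives `0‼ = 1`, the usual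
value of `(-1)‼`. -/
def casimirCount (a p q : ℕ) : ℕ :=
  if p = q then (a - 1)‼ * (2 * p)‼ else 0

lemma casimirCount_comm (a p q : ℕ) : casimirCount a p q = casimirCount a q p := by
  unfold casimirCount
  split_ifs <;> simp_all

lemma casimirCount_raise {a p q : ℕ} (h : Even (a + p + q)) :
    a * casimirCount (a - 1) p (q + 1) = 2 * p * casimirCount (a + 1) (p - 1) q := by
  rcases p with _ | p
  · simp [casimirCount]
  rcases eq_or_ne p q with rfl | hpq
  · obtain ⟨c, rfl⟩ : ∃ c, a = c + 1 := Nat.exists_eq_add_one.mpr (by grind)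
    simp only [casimirCount, if_true, Nat.add_sub_cancel, Nat.doubleFactorial_add_one c,
      mul_add_one 2 p, Nat.doubleFactorial_add_two]
    ring
  · simp [casimirCount, hpq]

/-- The family of coefficients `casimirCount` as a function of the content of a word. -/
def casimirCoeff (m : Multiset (Fin 3)) : ℕ :=
  casimirCount (m.count 0) (m.count 1) (m.count 2)

lemma isInvariantCoeff_casimirCoeff {n : ℕ} (hn : Even n) : IsInvariantCoeff n casimirCoeff where
  weight m _ := by
    unfold casimirCoeff casimirCount
    split_ifs with h
    · rw [h]
    · simp
  raise m hm := by
    rw [← hm, card_eq_sum_count_fin_three] at hn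
    simpa [casimirCoeff] using casimirCount_raise hn
  lower m hm := by
    rw [← hm, card_eq_sum_count_fin_three, add_right_comm] at hn
    have swapped := casimirCount_raise hn
    rw [casimirCount_comm, casimirCount_comm (_ + 1)] at swapped
    simpa [casimirCoeff] using swapped

lemma casimirCoeff_balancedContent_ne_zero (k : ℕ) : casimirCoeff (balancedContent k) ≠ 0 := by
  simp [casimirCoeff, casimirCount, balancedContent, Multiset.count_replicate,
    (Nat.doubleFactorial_pos _).ne']

end Casimir

end InvariantCoeff

section Sl2

lemma sl2_apply_one_one_s14 (x : sl2) : x.1 1 1 = -x.1 0 0 := by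
  have trace_eq : Matrix.trace (x.1 : Matrix (Fin 2) (Fin 2) ℚ) = 0 := x.2
  rw [Matrix.trace_fin_two] at trace_eq
  linarith

/-- The basis `h, e, f` of `sl2`, indexed by `0, 1, 2`. -/
def sl2Basis : Module.Basis (Fin 3) ℚ sl2 := .ofEquivFun
  { toFun x := ![x.1 0 0, x.1 0 1, x.1 1 0]
    invFun c := ⟨!![c 0, c 1; c 2, -c 0], by
      change Matrix.trace (!![c 0, c 1; c 2, -c 0] : Matrix (Fin 2) (Fin 2) ℚ) = 0
      simp [Matrix.trace_fin_two]⟩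
    map_add' x y := by ext k; fin_cases k <;> rfl
    map_smul' r x := by ext k; fin_cases k <;> rfl
    left_inv x := by
      ext i j
      fin_cases i <;> fin_cases j <;> simp [sl2_apply_one_one_s14]
    right_inv c := by ext k; fin_cases k <;> rfl }

lemma sl2Basis_repr (x : sl2) : ⇑(sl2Basis.repr x) = ![x.1 0 0, x.1 0 1, x.1 1 0] := rfl

lemma toMatrix_ad_sl2Basis (x : sl2) :
    LinearMap.toMatrix sl2Basis sl2Basis (LieAlgebra.ad ℚ sl2 x) =
      !![0, -x.1 1 0, x.1 0 1;
         -2 * x.1 0 1, 2 * x.1 0 0, 0;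
         2 * x.1 1 0, 0, -2 * x.1 0 0] := by
  ext j k
  rw [LinearMap.toMatrix_apply, sl2Basis_repr]
  fin_cases j <;> fin_cases k <;>
    simp [sl2Basis, sl2_apply_one_one_s14, Ring.lie_def, Matrix.mul_apply, Matrix.vecMul,
      dotProduct] <;>
    ring

variable {n : ℕ}

lemma repr_tensorDerivation_ad_of_symmetric (x : sl2) {v : TP n} {F : Multiset (Fin 3) → ℚ}
    (hF : ∀ s, (tensorPowerBasis sl2Basis).repr v s = F (wordContent s)) (s : Fin n → Fin 3) :
    (tensorPowerBasis sl2Basis).repr (tensorDerivation (LieAlgebra.ad ℚ sl2 x) v) s =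
      letI m := wordContent s
      2 * x.1 0 0 * (m.count 1 * F m - m.count 2 * F m) +
      x.1 0 1 * (m.count 0 * F (2 ::ₘ m.erase 0) - 2 * m.count 1 * F (0 ::ₘ m.erase 1)) -
      x.1 1 0 * (m.count 0 * F (1 ::ₘ m.erase 0) - 2 * m.count 2 * F (0 ::ₘ m.erase 2)) := by
  set m := wordContent s
  have count_mul_cons_erase (k : Fin 3) : m.count k * F (k ::ₘ m.erase k) = m.count k * F m := by
    by_cases hk : k ∈ m
    · rw [Multiset.cons_erase hk]
    · simp [Multiset.count_eq_zero_of_notMem hk]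
  rw [tensorPowerBasis_repr_tensorDerivation_of_symmetric _ _ hF, toMatrix_ad_sl2Basis]
  simp only [Fin.sum_univ_three, nsmul_eq_mul, Matrix.of_apply, Matrix.cons_val, zero_mul, zero_add,
    add_zero]
  linear_combination
    2 * x.1 0 0 * count_mul_cons_erase 1 - 2 * x.1 0 0 * count_mul_cons_erase 2

lemma mem_invariants_iff_isInvariantCoeff {v : TP n} {F : Multiset (Fin 3) → ℚ}
    (hF : ∀ s, (tensorPowerBasis sl2Basis).repr v s = F (wordContent s)) :
    v ∈ Invariants n ↔ IsInvariantCoeff n F := by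
  rw [mem_invariants_iff]
  constructor
  · intro hv
    have eqn (x : sl2) {m : Multiset (Fin 3)} (hm : m.card = n) :
        2 * x.1 0 0 * (m.count 1 * F m - m.count 2 * F m) +
        x.1 0 1 * (m.count 0 * F (2 ::ₘ m.erase 0) - 2 * m.count 1 * F (0 ::ₘ m.erase 1)) -
        x.1 1 0 * (m.count 0 * F (1 ::ₘ m.erase 0) - 2 * m.count 2 * F (0 ::ₘ m.erase 2)) = 0 := by
      obtain ⟨s, rfl⟩ := exists_wordContent_eq (ι := Fin n) (hm.trans (Fintype.card_fin n).symm)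
      rw [← repr_tensorDerivation_ad_of_symmetric x hF, hv x, map_zero, Finsupp.zero_apply]
    exact
      { weight m hm := by simpa [sl2Basis, sub_eq_zero] using eqn (sl2Basis 0) hm
        raise m hm := by simpa [sl2Basis, sub_eq_zero] using eqn (sl2Basis 1) hm
        lower m hm := .symm (by simpa [sl2Basis, sub_eq_zero] using eqn (sl2Basis 2) hm) }
  · intro hF' x
    refine (tensorPowerBasis sl2Basis).ext_elem fun s => ?_
    have hs : (wordContent s).card = n := (card_wordContent s).trans (Fintype.card_fin n)
    rw [repr_tensorDerivation_ad_of_symmetric x hF, hF'.weight _ hs, hF'.raise _ hs,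
      hF'.lower _ hs]
    simp

lemma mem_symFixedInvariants_iff {v : TP n} :
    v ∈ SymFixedInvariants n ↔ ∃ F : Multiset (Fin 3) → ℚ, IsInvariantCoeff n F ∧
      ∀ s, (tensorPowerBasis sl2Basis).repr v s = F (wordContent s) := by
  have fixed_iff : v ∈ ⨅ σ, LinearMap.ker (permMap n σ - LinearMap.id) ↔
      ∃ F : Multiset (Fin 3) → ℚ,
        ∀ s, (tensorPowerBasis sl2Basis).repr v s = F (wordContent s) := by
    rw [← forall_reindex_eq_iff_exists_repr_eq_wordContent]
    simp only [Submodule.mem_iInf, LinearMap.mem_ker, LinearMap.sub_apply, LinearMap.id_apply,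
      sub_eq_zero]
    rfl
  rw [SymFixedInvariants, Submodule.mem_inf, fixed_iff, ← exists_and_left]
  exact exists_congr fun F => and_congr_left mem_invariants_iff_isInvariantCoeff

lemma eq_zero_of_mem_symFixedInvariants {v : TP n} (hv : v ∈ SymFixedInvariants n)
    (h_balanced : ∀ k, n = k + k → ∃ s, wordContent s = balancedContent k ∧
      (tensorPowerBasis sl2Basis).repr v s = 0) : v = 0 := by
  obtain ⟨F, hF, hvF⟩ := mem_symFixedInvariants_iff.mp hv
  refine (tensorPowerBasis sl2Basis).ext_elem fun t => ?_
  rw [hvF, map_zero, Finsupp.zero_apply]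
  refine hF.eq_zero_of_apply_balancedContent (fun k hk => ?_) (by simp [card_wordContent])
  obtain ⟨s, hs, hvs⟩ := h_balanced k hk
  rw [← hs, ← hvF, hvs]

lemma symFixedInvariants_eq_bot_of_not_even (hn : ¬Even n) : SymFixedInvariants n = ⊥ :=
  (Submodule.eq_bot_iff _).mpr fun _ hv =>
    eq_zero_of_mem_symFixedInvariants hv fun k hk => absurd ⟨k, hk⟩ hn

/-- The invariant symmetric tensor with coefficients `casimirCoeff`. -/
def casimirTensor (n : ℕ) : TP n :=
  (tensorPowerBasis sl2Basis).equivFun.symm fun s => (casimirCoeff (wordContent s) : ℚ)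

lemma casimirTensor_repr (s : Fin n → Fin 3) :
    (tensorPowerBasis sl2Basis).repr (casimirTensor n) s = casimirCoeff (wordContent s) := by
  rw [← Module.Basis.equivFun_apply, casimirTensor, LinearEquiv.apply_symm_apply]

lemma casimirTensor_mem_symFixedInvariants (hn : Even n) :
    casimirTensor n ∈ SymFixedInvariants n :=
  mem_symFixedInvariants_iff.mpr
    ⟨_, (isInvariantCoeff_casimirCoeff hn).natCast, casimirTensor_repr⟩

lemma finrank_symFixedInvariants_of_even (hn : Even n) :
    Module.finrank ℚ (SymFixedInvariants n) = 1 := by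
  obtain ⟨k, hk⟩ := id hn
  obtain ⟨s, hs⟩ := exists_wordContent_eq (ι := Fin n) (m := balancedContent k)
    (by rw [card_balancedContent, Fintype.card_fin, hk])
  let balancedCoeff : SymFixedInvariants n →ₗ[ℚ] ℚ :=
    ((tensorPowerBasis sl2Basis).coord s).domRestrict (SymFixedInvariants n)
  have injective : Function.Injective balancedCoeff := by
    refine (injective_iff_map_eq_zero _).mpr fun ⟨v, hv⟩ hvs => Subtype.ext ?_
    refine eq_zero_of_mem_symFixedInvariants hv fun l hl => ⟨s, ?_, hvs⟩
    rw [hs, show k = l by omega]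
  have surjective : Function.Surjective balancedCoeff := by
    refine LinearMap.surjective fun h => casimirCoeff_balancedContent_ne_zero k ?_
    rw [← hs, ← Nat.cast_eq_zero (R := ℚ), ← casimirTensor_repr]
    exact LinearMap.congr_fun h ⟨casimirTensor n, casimirTensor_mem_symFixedInvariants hn⟩
  rw [(LinearEquiv.ofBijective balancedCoeff ⟨injective, surjective⟩).finrank_eq,
    Module.finrank_self]

theorem finrank_symFixedInvariants (n : ℕ) :
    Module.finrank ℚ (SymFixedInvariants n) = if Even n then 1 else 0 := by
  split_ifs with hn
  · exact finrank_symFixedInvariants_of_even hn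
  · rw [symFixedInvariants_eq_bot_of_not_even hn, finrank_bot]

end Sl2

theorem symmetric_group_action_on_invariants :
    ∀ n, 2 ≤ n →
      (∀ (σ : Equiv.Perm (Fin n)) (m : Fin n → sl2),
        permMap n σ (PiTensorProduct.tprod ℚ m)
          = PiTensorProduct.tprod ℚ (fun i => m (σ⁻¹ i))) ∧
      (∀ σ τ : Equiv.Perm (Fin n),
        permMap n (σ * τ) = (permMap n σ) ∘ₗ (permMap n τ)) ∧
      (∀ (σ : Equiv.Perm (Fin n)) (v : TP n), v ∈ Invariants n →
        permMap n σ v ∈ Invariants n) ∧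
      Module.finrank ℚ (SymFixedInvariants n) = (if Even n then 1 else 0) := by
  intro n _
  exact ⟨permMap_tprod, permMap_mul, fun σ _ => permMap_mem_invariants σ,
    finrank_symFixedInvariants n⟩
end
end
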